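/- With the hypotheses of the previous statement, one has ℤ·Irr(B) ∩ ℤ·Irr(G)^C = ℤ·{Φ_ψ : ψ ∈ b}, i.e., the virtual characters in the span of Irr(B) that vanish off C are exactly the ℤ-linear combinations of the dual basis elements Φ_ψ. -/

import Mathlib

open scoped BigOperators

/-- The standard inner product `⟨f, g⟩_G = (1/|G|) Σ_x f(x)·conj(g(x))` on functions
`G → ℂ`. -/
noncomputable def classInner (G : Type*) [Fintype G] (f g : G → ℂ) : ℂ :=
  (Fintype.card G : ℂ)⁻¹ * ∑ x : G, f x * (starRingEnd ℂ) (g x)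

/-- `res_C f`: the function agreeing with `f` on `C` and vanishing off `C`. -/
def resClass {G : Type*} (C : Set G) [DecidablePred (· ∈ C)] (f : G → ℂ) : G → ℂ :=
  fun x => if x ∈ C then f x else 0

open Matrix ComplexOrder in
theorem aux_char_inv {G : Type} [Group G] [Fintype G] (V : FDRep ℂ G) (g : G) :
    V.character g⁻¹ = (starRingEnd ℂ) (V.character g) := by
  classical
  let bb := Module.finBasis ℂ V
  let M : G → Matrix _ _ ℂ := fun g => LinearMap.toMatrix bb bb (V.ρ g)
  have hM1 : M 1 = 1 := by simp [M]
  have hMm : ∀ x y, M (x * y) = M x * M y := by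
    intro x y
    simp only [M, map_mul, LinearMap.toMatrix_mul]
  have htr : ∀ x, V.character x = (M x).trace := by
    intro x
    exact LinearMap.trace_eq_matrix_trace ℂ bb _
  let P := ∑ x, (M x)ᴴ * M x
  have hP : P.PosDef := by
    have : P = (M 1)ᴴ * M 1 + ∑ x ∈ Finset.univ.erase 1, (M x)ᴴ * M x :=
      (Finset.add_sum_erase _ _ (Finset.mem_univ _)).symm
    rw [this]
    apply Matrix.PosDef.add_posSemidef
    · rw [hM1]; simpa using Matrix.PosDef.one
    · exact Matrix.posSemidef_sum _ fun x _ => Matrix.posSemidef_conjTranspose_mul_self _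
  have hinv : (M g)ᴴ * P * M g = P := by
    simp only [P, Finset.mul_sum, Finset.sum_mul]
    rw [← Equiv.sum_comp (Equiv.mulRight g) (fun x => (M x)ᴴ * M x)]
    refine Finset.sum_congr rfl fun x _ => ?_
    simp [hMm, Matrix.conjTranspose_mul, Matrix.mul_assoc]
  have hgg : M g * M g⁻¹ = 1 := by rw [← hMm]; simp [hM1]
  have hdet : IsUnit P.det := (Matrix.isUnit_iff_isUnit_det _).1 hP.isUnit
  have h2 : (M g)ᴴ = P * M g⁻¹ * P⁻¹ := by
    have h1 : P * M g⁻¹ = (M g)ᴴ * P := by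
      calc P * M g⁻¹ = ((M g)ᴴ * P * M g) * M g⁻¹ := by rw [hinv]
        _ = _ := by rw [Matrix.mul_assoc ((M g)ᴴ * P), hgg, Matrix.mul_one]
    rw [h1, Matrix.mul_assoc, Matrix.mul_nonsing_inv _ hdet, Matrix.mul_one]
  have h3 : star ((M g).trace) = (M g⁻¹).trace := by
    rw [← Matrix.trace_conjTranspose, h2, Matrix.trace_mul_comm, ← Matrix.mul_assoc,
      Matrix.nonsing_inv_mul _ hdet, Matrix.one_mul]
  rw [htr, htr, ← h3]; rfl

theorem aux_simple {G : Type} [Group G] [Fintype G] {V : Type} [AddCommGroup V] [Module ℂ V]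
    [FiniteDimensional ℂ V] (ρ : Representation ℂ G V) [ρ.IsIrreducible] :
    CategoryTheory.Simple (FDRep.of ρ) := by
  rw [FDRep.simple_iff_char_is_norm_one]
  have hn : (Nat.card G : ℂ) ≠ 0 := by simp
  have := invertibleOfNonzero hn
  have h := Representation.card_inv_mul_sum_char_mul_char_eq_finrank ρ ρ
  rw [Representation.IsIrreducible.finrank_intertwiningMap_self] at h
  rw [inv_mul_eq_iff_eq_mul₀ hn] at h
  rw [Nat.cast_one, mul_one] at h
  exact h

theorem aux_kill {G : Type} [Group G] [Fintype G] (f : G → ℂ)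
    (hf : ∀ g x, f (x * g * x⁻¹) = f g)
    (h0 : ∀ V : FDRep ℂ G, CategoryTheory.Simple V → ∑ g, f g * V.character g = 0)
    {V : Type} [AddCommGroup V] [Module ℂ V]
    [FiniteDimensional ℂ V] (ρ : Representation ℂ G V) [hir : ρ.IsIrreducible] :
    ∑ g, f g • ρ g = 0 := by
  let T : V →ₗ[ℂ] V := ∑ g, f g • ρ g
  have hT : ∀ x, T ∘ₗ ρ x = ρ x ∘ₗ T := by
    intro x
    change (∑ g, f g • ρ g) * ρ x = ρ x * ∑ g, f g • ρ g
    rw [Finset.sum_mul, Finset.mul_sum, ← Equiv.sum_comp (MulAut.conj x).toEquiv]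
    refine Finset.sum_congr rfl fun g _ => ?_
    have h1 : (MulAut.conj x).toEquiv g = x * g * x⁻¹ := rfl
    rw [h1, hf, smul_mul_assoc, mul_smul_comm, ← map_mul, ← map_mul, inv_mul_cancel_right]
  let T' : Representation.IntertwiningMap ρ ρ := ⟨T, hT⟩
  obtain ⟨c, hc⟩ := (Representation.IsIrreducible.algebraMap_intertwiningMap_bijective_of_isAlgClosed
    (ρ := ρ)).2 T'
  have hc' : T = c • LinearMap.id := by
    have : T = T'.toLinearMap := rfl
    rw [this, ← hc]; rfl
  have htr : LinearMap.trace ℂ V T = 0 := by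
    rw [← h0 (FDRep.of ρ) (aux_simple ρ)]
    simp only [T, map_sum, map_smul, smul_eq_mul]
    rfl
  have hnt : Nontrivial V := by
    have := (Representation.irreducible_iff_isSimpleModule_asModule ρ).1 hir
    exact IsSimpleModule.nontrivial (MonoidAlgebra ℂ G) ρ.asModule
  rw [hc', map_smul, LinearMap.trace_id] at htr
  have : c = 0 := by
    have := Module.finrank_pos (R := ℂ) (M := V)
    rcases mul_eq_zero.1 htr with h | h
    · exact h
    · exact absurd (by exact_mod_cast h) this.ne'
  change T = 0
  rw [hc', this, zero_smul]

theorem aux_kill_mod {G : Type} [Group G] [Fintype G] (f : G → ℂ)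
    (hf : ∀ g x, f (x * g * x⁻¹) = f g)
    (h0 : ∀ V : FDRep ℂ G, CategoryTheory.Simple V → ∑ g, f g * V.character g = 0)
    (M : Type) [AddCommGroup M] [Module ℂ M] [Module (MonoidAlgebra ℂ G) M]
    [IsScalarTower ℂ (MonoidAlgebra ℂ G) M]
    [hs : IsSimpleModule (MonoidAlgebra ℂ G) M] (m : M) :
    (∑ g, f g • MonoidAlgebra.of ℂ G g : MonoidAlgebra ℂ G) • m = 0 := by
  let ρ : Representation ℂ G M := Representation.ofModule' M
  have hρ : ρ.asAlgebraHom = Algebra.lsmul ℂ ℂ M :=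
    (MonoidAlgebra.lift ℂ (M →ₗ[ℂ] M) G).apply_symm_apply _
  let e : ρ.asModule ≃ₗ[MonoidAlgebra ℂ G] M :=
    { ρ.asModuleEquiv.toAddEquiv with
      map_smul' := fun r x => by
        have h := Representation.asModuleEquiv_map_smul ρ r x
        rw [hρ] at h
        exact h }
  have hir : ρ.IsIrreducible :=
    (Representation.irreducible_iff_isSimpleModule_asModule ρ).2 (IsSimpleModule.congr e)
  have hfin : FiniteDimensional ℂ M := by
    have h1 : Module.Finite ℂ (MonoidAlgebra ℂ G) := inferInstance
    exact Module.Finite.trans (MonoidAlgebra ℂ G) _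
  have h := aux_kill f hf h0 ρ
  have h2 : ρ.asAlgebraHom (∑ g, f g • MonoidAlgebra.of ℂ G g) = 0 := by
    simp only [map_sum, map_smul, Representation.asAlgebraHom_of]
    exact h
  rw [hρ] at h2
  exact LinearMap.congr_fun h2 m

theorem aux_complete {G : Type} [Group G] [Fintype G] (f : G → ℂ)
    (hf : ∀ g x, f (x * g * x⁻¹) = f g)
    (h0 : ∀ V : FDRep ℂ G, CategoryTheory.Simple V → ∑ g, f g * V.character g = 0) :
    f = 0 := by
  let z : MonoidAlgebra ℂ G := ∑ g, f g • MonoidAlgebra.of ℂ G g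
  have hz : z ∈ Module.jacobson (MonoidAlgebra ℂ G) (MonoidAlgebra ℂ G) := by
    rw [Module.jacobson, Submodule.mem_sInf]
    intro I hI
    have hs : IsSimpleModule (MonoidAlgebra ℂ G) (MonoidAlgebra ℂ G ⧸ I) :=
      isSimpleModule_iff_isCoatom.2 hI
    have h3 : z • (I.mkQ 1) = 0 := aux_kill_mod f hf h0 (MonoidAlgebra ℂ G ⧸ I) (I.mkQ 1)
    rw [← map_smul] at h3
    simpa using h3
  rw [IsSemisimpleModule.jacobson_eq_bot] at hz
  have hz0 : z = 0 := hz
  funext g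
  have h4 : z.coeff g = f g := by
    classical
    simp [z, MonoidAlgebra.of_apply, Finsupp.single_apply]
  rw [← h4, hz0]; rfl

/-- The inner product, as a linear form in its first argument. -/
noncomputable def auxIn {G : Type} [Fintype G] (g : G → ℂ) : (G → ℂ) →ₗ[ℂ] ℂ where
  toFun f := classInner G f g
  map_add' f f' := by
    simp [classInner, add_mul, Finset.sum_add_distrib, mul_add]
  map_smul' c f := by
    simp only [classInner, Pi.smul_apply, smul_eq_mul, RingHom.id_apply, Finset.mul_sum]
    exact Finset.sum_congr rfl fun x _ => by ring

theorem auxIn_symm {G : Type} [Fintype G] (f g : G → ℂ) :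
    auxIn g f = (starRingEnd ℂ) (auxIn f g) := by
  simp only [auxIn, classInner, LinearMap.coe_mk, AddHom.coe_mk, map_mul, map_sum, map_inv₀,
    map_natCast, Complex.conj_conj]
  simp only [mul_comm]

theorem auxIn_self {G : Type} [Group G] [Fintype G] (f : G → ℂ) (h : auxIn f f = 0) : f = 0 := by
  simp only [auxIn, classInner, LinearMap.coe_mk, AddHom.coe_mk] at h
  have hn : (Fintype.card G : ℂ)⁻¹ ≠ 0 := by simp
  have h2 := (mul_eq_zero.1 h).resolve_left hn
  simp only [Complex.mul_conj] at h2
  have h3 : ∑ x, Complex.normSq (f x) = 0 := by exact_mod_cast h2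
  rw [Finset.sum_eq_zero_iff_of_nonneg (fun x _ => Complex.normSq_nonneg _)] at h3
  funext x
  exact Complex.normSq_eq_zero.1 (h3 x (Finset.mem_univ _))

theorem auxIn_sum {G : Type} [Fintype G] {α : Type*} (s : Finset α) (c : α → ℤ)
    (g : α → G → ℂ) (f : G → ℂ) :
    auxIn (∑ i ∈ s, c i • g i) f = ∑ i ∈ s, (c i : ℂ) * auxIn (g i) f := by
  rw [auxIn_symm, map_sum, map_sum]
  refine Finset.sum_congr rfl fun i _ => ?_
  rw [map_zsmul, auxIn_symm f (g i), zsmul_eq_mul, map_mul]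
  simp

theorem auxIn_res {G : Type} [Fintype G] (C : Set G) [DecidablePred (· ∈ C)] (f g : G → ℂ)
    (hf : ∀ x ∉ C, f x = 0) : auxIn (resClass C g) f = auxIn g f := by
  simp only [auxIn, classInner, LinearMap.coe_mk, AddHom.coe_mk]
  congr 1
  refine Finset.sum_congr rfl fun x _ => ?_
  by_cases hx : x ∈ C
  · simp [resClass, hx]
  · simp [hf x hx]

theorem aux_orth {G : Type} [Group G] [Fintype G] (V W : FDRep ℂ G) (hV : CategoryTheory.Simple V)
    (hW : CategoryTheory.Simple W) :
    (V.character = W.character → auxIn W.character V.character = 1) ∧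
    (V.character ≠ W.character → auxIn W.character V.character = 0) := by
  classical
  have hn : (Nat.card G : ℂ) ≠ 0 := by simp
  have := invertibleOfNonzero hn
  have key : ∀ (V W : FDRep ℂ G), CategoryTheory.Simple V → CategoryTheory.Simple W →
      auxIn W.character V.character = if Nonempty (V ≅ W) then 1 else 0 := by
    intro V W hV hW
    have h := FDRep.char_orthonormal V W
    simp only [auxIn, classInner, LinearMap.coe_mk, AddHom.coe_mk]
    rw [← Nat.card_eq_fintype_card]
    simp only [← aux_char_inv]
    simpa using h
  constructor
  · intro h
    rw [← h, key V V hV hV, if_pos ⟨CategoryTheory.Iso.refl V⟩]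
  · intro h
    rw [key V W hV hW, if_neg]
    rintro ⟨i⟩
    exact h (FDRep.char_iso i)

theorem aux_span {E ι : Type*} [AddCommGroup E] (B : Finset ι) (v : ι → E) {f : E}
    (hf : f ∈ Submodule.span ℤ ((fun i => v i) '' ↑B)) : ∃ a : ι → ℤ, ∑ i ∈ B, a i • v i = f := by
  classical
  obtain ⟨a, ha⟩ := (Submodule.mem_span_image_finset_iff_exists_fun ℤ).1 hf
  refine ⟨fun i => if h : i ∈ B then a ⟨i, h⟩ else 0, ?_⟩
  rw [← ha, ← Finset.sum_coe_sort B]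
  exact Finset.sum_congr rfl fun i _ => by simp

theorem aux_complete' {G : Type} [Group G] [Fintype G] (f : G → ℂ)
    (hf : ∀ g x, f (x * g * x⁻¹) = f g)
    (h0 : ∀ V : FDRep ℂ G, CategoryTheory.Simple V → auxIn V.character f = 0) :
    f = 0 := by
  have h := aux_complete (fun x => (starRingEnd ℂ) (f x)) (fun g x => by simp only [hf]) (by
    intro V hV
    have h1 := h0 V hV
    rw [auxIn_symm, map_eq_zero] at h1
    simp only [auxIn, classInner, LinearMap.coe_mk, AddHom.coe_mk] at h1
    have hn : (Fintype.card G : ℂ)⁻¹ ≠ 0 := by simp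
    have h2 := (mul_eq_zero.1 h1).resolve_left hn
    simpa only [mul_comm] using h2)
  funext x
  have := congrFun h x
  simpa using this

/-- **[Brunat–Gramain, Corollary 2.3], second part.**
With the same setup as the first part (`G` finite, `C` a union of conjugacy classes,
`χ` an enumeration of `Irr(G)`, `B` a union of `C`-blocks, `b` a `ℤ`-basis of
`ℤ·Irr(B)^C` and `Φ` its dual basis), one has
`ℤ·Irr(B) ∩ ℤ·Irr(G)^C = ℤ·{Φ_ψ : ψ ∈ b}`: the virtual characters in the `ℤ`-span of
`Irr(B)` that vanish off `C` are exactly the `ℤ`-linear combinations of the dual basis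
elements `Φ_ψ`. -/
theorem stmt_15 {G : Type} [Group G] [Fintype G] {ι κ : Type*} [Fintype ι]
    [DecidableEq ι] [Fintype κ] [DecidableEq κ]
    (χ : ι → G → ℂ) (C : Set G) [DecidablePred (· ∈ C)]
    (hCconj : ∀ g x : G, g ∈ C → x * g * x⁻¹ ∈ C)
    -- `χ` enumerates the irreducible characters of `G`:
    (hirr : ∀ i, ∃ V : FDRep ℂ G, CategoryTheory.Simple V ∧ V.character = χ i)
    (hall : ∀ V : FDRep ℂ G, CategoryTheory.Simple V → ∃ i, V.character = χ i)
    (hinj : Function.Injective χ)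
    (B : Finset ι)
    -- `B` is a union of `C`-blocks:
    (hB : ∀ i ∈ B, ∀ j ∉ B, classInner G (resClass C (χ i)) (resClass C (χ j)) = 0)
    (b : κ → G → ℂ)
    -- `b` is a `ℤ`-basis of `ℤ·Irr(B)^C`:
    (hb_mem : ∀ k, b k ∈ Submodule.span ℤ ((fun i => resClass C (χ i)) '' ↑B))
    (hb_indep : LinearIndependent ℤ b)
    (d : ι → κ → ℤ)
    (hd : ∀ i ∈ B, resClass C (χ i) = ∑ k, d i k • b k)
    (Φ : κ → G → ℂ)
    -- `Φ` is the dual basis of `b` inside `ℂ·Irr(B)^C`: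
    (hΦ_mem : ∀ k, Φ k ∈ Submodule.span ℂ (Set.range b))
    (hΦ_dual : ∀ k k', classInner G (b k') (Φ k) = if k' = k then 1 else 0) :
    ∀ f : G → ℂ,
      (f ∈ Submodule.span ℤ ((fun i => χ i) '' ↑B) ∧
        f ∈ Submodule.span ℤ (Set.range χ) ∧ ∀ x ∉ C, f x = 0) ↔
      f ∈ Submodule.span ℤ (Set.range Φ) := by
  have horth : ∀ i j, auxIn (χ j) (χ i) = if i = j then 1 else 0 := by
    intro i j
    obtain ⟨V, hV, hVi⟩ := hirr i
    obtain ⟨W, hW, hWj⟩ := hirr j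
    have h := aux_orth V W hV hW
    rw [hVi, hWj] at h
    split_ifs with hij
    · exact h.1 (by rw [hij])
    · exact h.2 (fun h' => hij (hinj h'))
  have hcomp : ∀ f : G → ℂ, (∀ g x, f (x * g * x⁻¹) = f g) → (∀ i, auxIn (χ i) f = 0) →
      f = 0 := by
    intro f hf h0
    refine aux_complete' f hf fun V hV => ?_
    obtain ⟨i, hi⟩ := hall V hV
    rw [hi]; exact h0 i
  have hχconj : ∀ i g x, χ i (x * g * x⁻¹) = χ i g := by
    intro i g x
    obtain ⟨V, hV, hVi⟩ := hirr i
    rw [← hVi]; exact FDRep.char_conj V g x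
  have hCiff : ∀ g x : G, x * g * x⁻¹ ∈ C ↔ g ∈ C := by
    intro g x
    refine ⟨fun h => ?_, hCconj g x⟩
    have := hCconj _ x⁻¹ h
    simpa [mul_assoc] using this
  -- class functions supported on `C` and orthogonal to the characters outside `B`
  let S : Submodule ℂ (G → ℂ) :=
    { carrier := {f | (∀ g x, f (x * g * x⁻¹) = f g) ∧ (∀ x ∉ C, f x = 0) ∧
        ∀ j ∉ B, auxIn (χ j) f = 0}
      add_mem' := by
        rintro f f' ⟨h1, h2, h3⟩ ⟨h1', h2', h3'⟩
        refine ⟨fun g x => by simp [h1, h1'], fun x hx => by simp [h2 x hx, h2' x hx],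
          fun j hj => by simp [h3 j hj, h3' j hj]⟩
      zero_mem' := ⟨fun _ _ => rfl, fun _ _ => rfl, fun _ _ => map_zero _⟩
      smul_mem' := by
        rintro c f ⟨h1, h2, h3⟩
        refine ⟨fun g x => by simp [h1], fun x hx => by simp [h2 x hx],
          fun j hj => by simp [h3 j hj]⟩ }
  have hres0 : ∀ (g : G → ℂ), ∀ x ∉ C, resClass C g x = 0 := fun g x hx => by simp [resClass, hx]
  have hresS : ∀ i ∈ B, resClass C (χ i) ∈ S := by
    intro i hi
    refine ⟨fun g x => ?_, hres0 _, fun j hj => ?_⟩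
    · simp only [resClass, hCiff, hχconj]
    · rw [← auxIn_res C _ _ (hres0 _)]
      exact hB i hi j hj
  have hbS : ∀ k, b k ∈ S := by
    intro k
    have : Submodule.span ℤ ((fun i => resClass C (χ i)) '' ↑B) ≤ S.restrictScalars ℤ := by
      rw [Submodule.span_le]
      rintro _ ⟨i, hi, rfl⟩
      exact hresS i hi
    exact this (hb_mem k)
  have hΦS : ∀ k, Φ k ∈ S := by
    intro k
    have : Submodule.span ℂ (Set.range b) ≤ S := by
      rw [Submodule.span_le]
      rintro _ ⟨i, rfl⟩
      exact hbS i
    exact this (hΦ_mem k)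
  have hdual : ∀ k k', auxIn (b k') (Φ k) = if k' = k then 1 else 0 := by
    intro k k'
    have h : auxIn (Φ k) (b k') = if k' = k then 1 else 0 := hΦ_dual k k'
    rw [auxIn_symm, h]
    split_ifs <;> simp
  have hΦeq : ∀ k, Φ k = ∑ i ∈ B, d i k • χ i := by
    intro k
    rw [← sub_eq_zero]
    obtain ⟨h1, h2, h3⟩ := hΦS k
    apply hcomp
    · intro g x
      simp [h1, hχconj, Finset.sum_apply]
    · intro j
      rw [map_sub, map_sum]
      simp only [map_zsmul, horth]
      by_cases hj : j ∈ B
      · rw [← auxIn_res C _ _ h2, hd j hj, auxIn_sum]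
        simp [hdual, hj]
      · rw [h3 j hj]
        simp [hj]
  intro f
  constructor
  · rintro ⟨hf, -, hfC⟩
    obtain ⟨a, ha⟩ := aux_span B χ hf
    have hfχ : ∀ i ∈ B, auxIn (χ i) f = a i := by
      intro i hi
      rw [← ha, map_sum]
      simp only [map_zsmul, horth]
      simp [hi]
    have hint : ∀ k, ∃ m : ℤ, auxIn (b k) f = m := by
      intro k
      obtain ⟨c, hc⟩ := aux_span B (fun i => resClass C (χ i)) (hb_mem k)
      refine ⟨∑ i ∈ B, c i * a i, ?_⟩
      rw [← hc, auxIn_sum]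
      push_cast
      refine Finset.sum_congr rfl fun i hi => ?_
      rw [auxIn_res C _ _ hfC, hfχ i hi]
    choose m hm using hint
    have hfb : f ∈ Submodule.span ℂ (Set.range b) := by
      have h1 : f = ∑ i ∈ B, a i • resClass C (χ i) := by
        funext x
        by_cases hx : x ∈ C
        · rw [← ha]
          simp [resClass, hx, Finset.sum_apply]
        · rw [hfC x hx]
          simp [resClass, hx, Finset.sum_apply]
      rw [h1]
      refine Submodule.sum_mem _ fun i hi => ?_
      apply zsmul_mem
      rw [hd i hi]
      refine Submodule.sum_mem _ fun k _ => ?_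
      apply zsmul_mem
      exact Submodule.subset_span ⟨k, rfl⟩
    let f' := f - ∑ k, m k • Φ k
    have hf'b : f' ∈ Submodule.span ℂ (Set.range b) :=
      Submodule.sub_mem _ hfb (Submodule.sum_mem _ fun k _ => zsmul_mem (hΦ_mem k) _)
    have horth' : ∀ k, auxIn (b k) f' = 0 := by
      intro k
      simp only [f', map_sub, map_sum, map_zsmul, hdual, hm]
      simp
    have hker : Submodule.span ℂ (Set.range b) ≤ LinearMap.ker (auxIn f') := by
      rw [Submodule.span_le]
      rintro _ ⟨k, rfl⟩
      change auxIn f' (b k) = 0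
      rw [auxIn_symm, horth', map_zero]
    have hz : f' = 0 := auxIn_self f' (hker hf'b)
    rw [sub_eq_zero.1 hz]
    exact Submodule.sum_mem _ fun k _ => Submodule.smul_mem _ _ (Submodule.subset_span ⟨k, rfl⟩)
  · intro hf
    have hf1 : f ∈ Submodule.span ℤ ((fun i => χ i) '' ↑B) := by
      refine (Submodule.span_le.2 ?_) hf
      rintro _ ⟨k, rfl⟩
      rw [hΦeq k]
      exact Submodule.sum_mem _ fun i hi =>
        Submodule.smul_mem _ _ (Submodule.subset_span ⟨i, hi, rfl⟩)
    have hf2 : f ∈ S.restrictScalars ℤ := by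
      refine (Submodule.span_le.2 ?_) hf
      rintro _ ⟨k, rfl⟩
      exact hΦS k
    exact ⟨hf1, Submodule.span_mono (Set.image_subset_range _ _) hf1, hf2.2.1⟩
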